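/- Suppose the coordinates u are normalized, B(u) satisfies the matching condition, and α = min{α_i : i ∈ J} < ∞. Then there exists a constant C > 0, depending only on the system, such that for any C^1 solution u = u(t,x) with |u| small, the source terms F̃_i and G̃_i of the divergence-form decomposition satisfy, for each i = 1,…,n: |F̃_i(t,x)| ≤ C [ Σ_{j≠k} |v_j w_k| + Σ_{j≠k} |v_j v_k| + |u_i|^α |v_i w_i| ] and |G̃_i(t,x)| ≤ C [ Σ_{j≠k} |v_j w_k| + Σ_{j≠k} |w_j w_k| ]. -/

import Mathlib

open scoped ENNReal
open MeasureTheory Matrix Set Filter Topology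

noncomputable section

/-- The state space `ℝⁿ`, realized as `Fin n → ℝ`. -/
abbrev V (n : ℕ) := Fin n → ℝ

/-- The Euclidean norm on `Fin n → ℝ`. -/
def eunorm {n : ℕ} (v : V n) : ℝ := Real.sqrt (∑ i, v i ^ 2)

/-- The `i`-th standard basis vector `e_i`. -/
def eb {n : ℕ} (i : Fin n) : V n := Pi.single i 1

/-- A first-order quasilinear strictly hyperbolic system
`∂u/∂t + A(u) ∂u/∂x = B(u)`, with suitably smooth coefficients on the
neighborhood `{|u| < δ}` of `u = 0`, real distinct eigenvalues
`λ_1(u) < ⋯ < λ_n(u)` and complete systems of left/right eigenvectors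
normalized by `l_i(u) r_j(u) ≡ δ_ij`, `r_i(u)ᵀ r_i(u) ≡ 1`. -/
structure HypSys (n : ℕ) where
  A : V n → Matrix (Fin n) (Fin n) ℝ
  B : V n → V n
  lam : Fin n → V n → ℝ
  l : Fin n → V n → V n
  r : Fin n → V n → V n
  δ : ℝ
  δ_pos : 0 < δ
  smooth_A : ∀ i j : Fin n, ContDiffOn ℝ (⊤ : ℕ∞) (fun u => A u i j) {u | eunorm u < δ}
  smooth_B : ContDiffOn ℝ (⊤ : ℕ∞) B {u | eunorm u < δ}
  smooth_lam : ∀ i : Fin n, ContDiffOn ℝ (⊤ : ℕ∞) (lam i) {u | eunorm u < δ}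
  smooth_l : ∀ i : Fin n, ContDiffOn ℝ (⊤ : ℕ∞) (l i) {u | eunorm u < δ}
  smooth_r : ∀ i : Fin n, ContDiffOn ℝ (⊤ : ℕ∞) (r i) {u | eunorm u < δ}
  strict_hyp : ∀ u : V n, eunorm u < δ → ∀ i j : Fin n, i < j → lam i u < lam j u
  eig_r : ∀ u : V n, eunorm u < δ → ∀ i, Matrix.mulVec (A u) (r i u) = lam i u • r i u
  eig_l : ∀ u : V n, eunorm u < δ → ∀ i, Matrix.vecMul (l i u) (A u) = lam i u • l i u
  norm_lr : ∀ u : V n, eunorm u < δ → ∀ i j : Fin n, l i u ⬝ᵥ r j u = if i = j then 1 else 0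
  norm_rr : ∀ u : V n, eunorm u < δ → ∀ i : Fin n, r i u ⬝ᵥ r i u = 1

namespace HypSys

variable {n : ℕ} (S : HypSys n)

/-- Normalized coordinates: `r_i(u_i e_i) ≡ e_i` for `|u_i|` small. -/
def Normalized : Prop := ∀ i : Fin n, ∀ s : ℝ, |s| < S.δ → S.r i (s • eb i) = eb i

/-- Matching condition for the inhomogeneous term: `B(u_i e_i) ≡ 0` for `|u_i|` small. -/
def Matching : Prop := ∀ i : Fin n, ∀ s : ℝ, |s| < S.δ → S.B (s • eb i) = 0

/-- In normalized coordinates, `∂^k λ_i / ∂u_i^k (0)`. -/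
def axisDeriv (i : Fin n) (k : ℕ) : ℝ := iteratedDeriv k (fun s : ℝ => S.lam i (s • eb i)) 0

/-- The `i`-th characteristic field is weakly linearly degenerate:
`λ_i(u_i e_i) ≡ λ_i(0)` for `|u_i|` small (in normalized coordinates). -/
def WLD (i : Fin n) : Prop := ∀ s : ℝ, |s| < S.δ → S.lam i (s • eb i) = S.lam i 0

/-- `α_i = a`: the derivatives `∂^k λ_i/∂u_i^k (0)` vanish for `k = 1, …, a`
but not for `k = a + 1`. -/
def IsAlphaOf (i : Fin n) (a : ℕ) : Prop :=
  (∀ k : ℕ, 1 ≤ k → k ≤ a → S.axisDeriv i k = 0) ∧ S.axisDeriv i (a + 1) ≠ 0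

/-- `a = α = min { α_i : i ∈ J } < ∞`, where `J` is the set of non weakly
linearly degenerate indices.  (In particular the system is not weakly
linearly degenerate.) -/
def IsMinAlpha (a : ℕ) : Prop :=
  (∃ i : Fin n, ¬ S.WLD i ∧ S.IsAlphaOf i a) ∧
    ∀ i : Fin n, ¬ S.WLD i → ∀ b : ℕ, S.IsAlphaOf i b → a ≤ b

/-- `b_i(u) = l_i(u) B(u)`. -/
def bcoef (i : Fin n) (u : V n) : ℝ := S.l i u ⬝ᵥ S.B u

/-- `β_{ijk}(u) = (λ_k(u) − λ_i(u)) l_i(u) ∇r_j(u) r_k(u)`. -/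
def beta (i j k : Fin n) (u : V n) : ℝ :=
  (S.lam k u - S.lam i u) * (S.l i u ⬝ᵥ fderiv ℝ (S.r j) u (S.r k u))

/-- `ν_{ijk}(u) = − l_i(u) ∇r_j(u) r_k(u)`. -/
def nu (i j k : Fin n) (u : V n) : ℝ := -(S.l i u ⬝ᵥ fderiv ℝ (S.r j) u (S.r k u))

/-- `γ_{ijk}(u) = (λ_k(u) − λ_j(u)) l_i(u) ∇r_j(u) r_k(u) − ∇λ_j(u) r_k(u) δ_ij`. -/
def gamma (i j k : Fin n) (u : V n) : ℝ :=
  (S.lam k u - S.lam j u) * (S.l i u ⬝ᵥ fderiv ℝ (S.r j) u (S.r k u)) -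
    (if i = j then fderiv ℝ (S.lam j) u (S.r k u) else 0)

/-- `σ_{ijk}(u) = l_i(u) (∇r_k(u) r_j(u) − ∇r_j(u) r_k(u))`. -/
def sigma (i j k : Fin n) (u : V n) : ℝ :=
  S.l i u ⬝ᵥ (fderiv ℝ (S.r k) u (S.r j u) - fderiv ℝ (S.r j) u (S.r k u))

/-- `β̃_{ijk}(u) = β_{ijk}(u) + ∇λ_i(u) r_k(u) δ_ij`. -/
def betaT (i j k : Fin n) (u : V n) : ℝ :=
  S.beta i j k u + (if i = j then fderiv ℝ (S.lam i) u (S.r k u) else 0)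

/-- `γ̃_{ijk}(u) = γ_{ijk}(u) + ½ [∇λ_j(u) r_k(u) δ_ij + ∇λ_k(u) r_j(u) δ_ik]`. -/
def gammaT (i j k : Fin n) (u : V n) : ℝ :=
  S.gamma i j k u + (1 / 2) *
    ((if i = j then fderiv ℝ (S.lam j) u (S.r k u) else 0) +
     (if i = k then fderiv ℝ (S.lam k) u (S.r j u) else 0))

/-- `b̃_{ik}(u) = Σ_l (∂b_i/∂u_l)(u) r_{kl}(u)`. -/
def btilde (i k : Fin n) (u : V n) : ℝ :=
  ∑ m : Fin n, fderiv ℝ (S.bcoef i) u (Pi.single m 1) * S.r k u m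

/-- `u` is a `C¹` solution of the Cauchy problem on `[0,T] × ℝ`, with initial
data `u0`, staying in the neighborhood `{|u| < δ}` of `u = 0`. -/
structure IsSolutionOn (u : ℝ → ℝ → V n) (u0 : ℝ → V n) (T : ℝ) : Prop where
  smooth : ContDiffOn ℝ 1 (fun p : ℝ × ℝ => u p.1 p.2) (Icc 0 T ×ˢ univ)
  small : ∀ t ∈ Icc (0 : ℝ) T, ∀ x : ℝ, eunorm (u t x) < S.δ
  pde : ∀ t ∈ Icc (0 : ℝ) T, ∀ x : ℝ,
    derivWithin (fun s => u s x) (Icc 0 T) t +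
      Matrix.mulVec (S.A (u t x)) (deriv (fun y => u t y) x) = S.B (u t x)
  init : ∀ x : ℝ, u 0 x = u0 x

/-- The lifespan `T̃` of the Cauchy problem with initial data `u0`
(as an extended nonnegative real). -/
def lifespan (u0 : ℝ → V n) : ℝ≥0∞ :=
  ⨆ (T : ℝ) (_ : ∃ u : ℝ → ℝ → V n, S.IsSolutionOn u u0 T), ENNReal.ofReal T

/-- `v_i = l_i(u) u`. -/
def vC (u : ℝ → ℝ → V n) (i : Fin n) (t x : ℝ) : ℝ := S.l i (u t x) ⬝ᵥ u t x

/-- `w_i = l_i(u) u_x`. -/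
def wC (u : ℝ → ℝ → V n) (i : Fin n) (t x : ℝ) : ℝ :=
  S.l i (u t x) ⬝ᵥ deriv (fun y => u t y) x

/-- `v = (v_1, …, v_n)`. -/
def vV (u : ℝ → ℝ → V n) (t x : ℝ) : V n := fun i => S.vC u i t x

/-- `w = (w_1, …, w_n)`. -/
def wV (u : ℝ → ℝ → V n) (t x : ℝ) : V n := fun i => S.wC u i t x

/-- `U_∞(T) = sup_{0≤t≤T} sup_x |u(t,x)|`. -/
def Uinf (_S : HypSys n) (u : ℝ → ℝ → V n) (T : ℝ) : ℝ :=
  ⨆ p : Icc (0 : ℝ) T × ℝ, eunorm (u p.1.1 p.2)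

/-- `V_∞(T) = sup_{0≤t≤T} sup_x |v(t,x)|`. -/
def Vinf (u : ℝ → ℝ → V n) (T : ℝ) : ℝ :=
  ⨆ p : Icc (0 : ℝ) T × ℝ, eunorm (S.vV u p.1.1 p.2)

/-- `W_∞(T) = sup_{0≤t≤T} sup_x |w(t,x)|`. -/
def Winf (u : ℝ → ℝ → V n) (T : ℝ) : ℝ :=
  ⨆ p : Icc (0 : ℝ) T × ℝ, eunorm (S.wV u p.1.1 p.2)

/-- `V_1(T) = sup_{0≤t≤T} ∫_ℝ |v(t,x)| dx`. -/
def V1 (u : ℝ → ℝ → V n) (T : ℝ) : ℝ :=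
  ⨆ t : Icc (0 : ℝ) T, ∫ x : ℝ, eunorm (S.vV u t.1 x)

/-- `W_1(T) = sup_{0≤t≤T} ∫_ℝ |w(t,x)| dx`. -/
def W1 (u : ℝ → ℝ → V n) (T : ℝ) : ℝ :=
  ⨆ t : Icc (0 : ℝ) T, ∫ x : ℝ, eunorm (S.wV u t.1 x)

/-- `ξ` is a `j`-th characteristic curve on `[0,T]`:  `ξ'(t) = λ_j(u(t, ξ(t)))`. -/
def IsChar (u : ℝ → ℝ → V n) (j : Fin n) (T : ℝ) (ξ : ℝ → ℝ) : Prop :=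
  ∀ t ∈ Icc (0 : ℝ) T, HasDerivWithinAt ξ (S.lam j (u t (ξ t))) (Icc 0 T) t

/-- `Ṽ_1(T) = max_{i≠j} sup_{C̃_j} ∫_{C̃_j} |v_i| dt`. -/
def V1t (u : ℝ → ℝ → V n) (T : ℝ) : ℝ :=
  sSup {A : ℝ | ∃ i j : Fin n, i ≠ j ∧ ∃ ξ : ℝ → ℝ, S.IsChar u j T ξ ∧
    A = ∫ t in Icc (0 : ℝ) T, |S.vC u i t (ξ t)|}

/-- `W̃_1(T) = max_{i≠j} sup_{C̃_j} ∫_{C̃_j} |w_i| dt`. -/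
def W1t (u : ℝ → ℝ → V n) (T : ℝ) : ℝ :=
  sSup {A : ℝ | ∃ i j : Fin n, i ≠ j ∧ ∃ ξ : ℝ → ℝ, S.IsChar u j T ξ ∧
    A = ∫ t in Icc (0 : ℝ) T, |S.wC u i t (ξ t)|}

/-- `Q_W(T) = Σ_{j≠k} ∫∫ |w_j||w_k|`. -/
def QW (u : ℝ → ℝ → V n) (T : ℝ) : ℝ :=
  ∑ j : Fin n, ∑ k : Fin n, if j = k then 0 else
    ∫ t in Icc (0 : ℝ) T, ∫ x : ℝ, |S.wC u j t x| * |S.wC u k t x|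

/-- `Q_{VW}(T) = Σ_{j≠k} ∫∫ |v_j||w_k|`. -/
def QVW (u : ℝ → ℝ → V n) (T : ℝ) : ℝ :=
  ∑ j : Fin n, ∑ k : Fin n, if j = k then 0 else
    ∫ t in Icc (0 : ℝ) T, ∫ x : ℝ, |S.vC u j t x| * |S.wC u k t x|

/-- `Q_V(T) = Σ_{j≠k} ∫∫ |v_j||v_k|`. -/
def QV (u : ℝ → ℝ → V n) (T : ℝ) : ℝ :=
  ∑ j : Fin n, ∑ k : Fin n, if j = k then 0 else
    ∫ t in Icc (0 : ℝ) T, ∫ x : ℝ, |S.vC u j t x| * |S.vC u k t x|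

/-- The coefficient `a_0(t;i,y) = γ_{iii}(u)` of the Riccati equation (5.5),
evaluated at `(t,x)`. -/
def ricA0 (u : ℝ → ℝ → V n) (i : Fin n) (t x : ℝ) : ℝ := S.gamma i i i (u t x)

/-- The coefficient `a_1(t;i,y)` of the Riccati equation (5.5), evaluated at `(t,x)`. -/
def ricA1 (u : ℝ → ℝ → V n) (i : Fin n) (t x : ℝ) : ℝ :=
  (∑ j : Fin n, if j = i then 0 else
      (S.gamma i i j (u t x) + S.gamma i j i (u t x)) * S.wC u j t x)
  + (∑ j : Fin n, S.sigma i j i (u t x) * S.bcoef j (u t x))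
  + (S.btilde i i (u t x) - S.btilde i i ((u t x i) • eb i))

/-- The coefficient `a_2(t;i,y)` of the Riccati equation (5.5), evaluated at `(t,x)`. -/
def ricA2 (u : ℝ → ℝ → V n) (i : Fin n) (t x : ℝ) : ℝ :=
  (∑ j : Fin n, ∑ k : Fin n, if j = k ∨ j = i ∨ k = i then 0 else
      S.gamma i j k (u t x) * S.wC u j t x * S.wC u k t x)
  + (∑ j : Fin n, ∑ k : Fin n, if k = i then 0 else
      S.sigma i j k (u t x) * S.bcoef j (u t x) * S.wC u k t x)
  + (∑ k : Fin n, if k = i then 0 else S.btilde i k (u t x) * S.wC u k t x)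

/-- `u` is a `C¹` solution of the system on the open set `Ω`, with values in
the neighborhood `{|u| < δ}`. -/
structure IsSol1On (u : ℝ → ℝ → V n) (Ω : Set (ℝ × ℝ)) : Prop where
  isOpen : IsOpen Ω
  smooth : ContDiffOn ℝ 1 (fun p : ℝ × ℝ => u p.1 p.2) Ω
  small : ∀ p ∈ Ω, eunorm (u p.1 p.2) < S.δ
  pde : ∀ p ∈ Ω, deriv (fun s => u s p.2) p.1 +
    Matrix.mulVec (S.A (u p.1 p.2)) (deriv (fun y => u p.1 y) p.2) = S.B (u p.1 p.2)

/-- `u` is a `C²` solution of the system on the open set `Ω`, with values in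
the neighborhood `{|u| < δ}`. -/
structure IsSol2On (u : ℝ → ℝ → V n) (Ω : Set (ℝ × ℝ)) : Prop where
  isOpen : IsOpen Ω
  smooth : ContDiffOn ℝ 2 (fun p : ℝ × ℝ => u p.1 p.2) Ω
  small : ∀ p ∈ Ω, eunorm (u p.1 p.2) < S.δ
  pde : ∀ p ∈ Ω, deriv (fun s => u s p.2) p.1 +
    Matrix.mulVec (S.A (u p.1 p.2)) (deriv (fun y => u p.1 y) p.2) = S.B (u p.1 p.2)

end HypSys

/-- The family of initial data `u(0,x) = f(ε,x)`: `f` is `C¹` in `(ε,x)`,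
`f(0,x) ≡ 0`, `∂²f/∂ε∂x(·,x)` is uniformly `C^r` (Hölder) on `[0,ε₁]`,
`ψ(x) = ∂f/∂ε(0,x)` is `C¹`, and `M = sup_x |ψ'(x)| < ∞`. -/
structure InitData (n : ℕ) where
  f : ℝ → ℝ → V n
  ε₁ : ℝ
  ε₁_pos : 0 < ε₁
  rexp : ℝ
  rexp_pos : 0 < rexp
  rexp_le_one : rexp ≤ 1
  smooth : ContDiff ℝ 1 (fun p : ℝ × ℝ => f p.1 p.2)
  zero : ∀ x : ℝ, f 0 x = 0
  psi_smooth : ContDiff ℝ 1 (fun x : ℝ => deriv (fun e => f e x) 0)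
  M_bdd : BddAbove (Set.range fun x : ℝ =>
    eunorm (deriv (fun x' : ℝ => deriv (fun e => f e x') 0) x))
  holder : ∃ CH : ℝ, ∀ x ε ε' : ℝ, ε ∈ Set.Icc 0 ε₁ → ε' ∈ Set.Icc 0 ε₁ →
    eunorm (deriv (fun e => deriv (fun y => f e y) x) ε
      - deriv (fun e => deriv (fun y => f e y) x) ε') ≤ CH * |ε - ε'| ^ rexp

namespace InitData

variable {n : ℕ} (D : InitData n)

/-- `ψ(x) = ∂f/∂ε(0,x)`. -/
def psi : ℝ → V n := fun x => deriv (fun e => D.f e x) 0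

/-- `M = sup_x |ψ'(x)|`. -/
def M : ℝ := ⨆ x : ℝ, eunorm (deriv D.psi x)

/-- The smallness conditions (1.17) on the initial data:
`∫|∂f/∂x(ε,·)| ≤ K₁ ε` and `∫|f(ε,·)| ≤ K₂ ε / (M+1)`. -/
def Small (K1 K2 ε : ℝ) : Prop :=
  Integrable (fun x : ℝ => eunorm (deriv (fun y => D.f ε y) x)) ∧
  Integrable (fun x : ℝ => eunorm (D.f ε x)) ∧
  (∫ x : ℝ, eunorm (deriv (fun y => D.f ε y) x)) ≤ K1 * ε ∧
  (∫ x : ℝ, eunorm (D.f ε x)) ≤ K2 / (D.M + 1) * ε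

end InitData

/-- The right-hand side of the sharp lifespan formula (1.26):
`max_{i∈J₁} sup_{x∈ℝ} ( −(1/α!) ∂^{α+1}λ_i/∂u_i^{α+1}(0) ψ_i(x)^α ψ_i'(x) )`. -/
def blowRate {n : ℕ} (S : HypSys n) (D : InitData n) (a : ℕ) : ℝ :=
  ⨆ i : {i : Fin n // ¬ S.WLD i ∧ S.IsAlphaOf i a}, ⨆ x : ℝ,
    (-(1 / (Nat.factorial a : ℝ)) * S.axisDeriv i.1 (a + 1) * (D.psi x) i.1 ^ a *
      deriv (fun x' => (D.psi x') i.1) x)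

open Asymptotics

lemma aux_axis_tendsto {n : ℕ} (j : Fin n) :
    Tendsto (fun u : V n => u j • (eb j : V n)) (𝓝 0) (𝓝 0) := by
  have h : Continuous (fun u : V n => u j • (eb j : V n)) := by fun_prop
  simpa using h.tendsto 0

lemma aux_lip {n : ℕ} {g : V n → ℝ} (hg : ContDiffAt ℝ 1 g 0) (j : Fin n) :
    (fun u : V n => g u - g (u j • eb j)) =O[𝓝 0] (fun u : V n => u - u j • eb j) := by
  obtain ⟨K, t, ht, hK⟩ := hg.exists_lipschitzOnWith
  refine IsBigO.of_bound K ?_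
  filter_upwards [ht, (aux_axis_tendsto j) ht] with u hu hu'
  exact hK.norm_sub_le hu hu'

lemma aux_lip_zero {n : ℕ} {g : V n → ℝ} (hg : ContDiffAt ℝ 1 g 0) (j : Fin n)
    (h0 : ∀ᶠ s : ℝ in 𝓝 0, g (s • eb j) = 0) :
    g =O[𝓝 0] (fun u : V n => u - u j • eb j) := by
  refine (aux_lip hg j).congr' ?_ (EventuallyEq.refl _ _)
  have ht : Tendsto (fun u : V n => u j) (𝓝 0) (𝓝 0) := by
    simpa using (continuous_apply j : Continuous (fun u : V n => u j)).tendsto 0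
  filter_upwards [ht.eventually h0] with u hu
  simp [hu]

lemma aux_axis_norm {n : ℕ} (j : Fin n) (u : V n) : ‖u j • (eb j : V n)‖ ≤ ‖u‖ := by
  refine (pi_norm_le_iff_of_nonneg (norm_nonneg u)).2 fun m => ?_
  by_cases h : m = j
  · subst h; simpa [eb] using norm_le_pi_norm u m
  · simp [eb, h]

lemma aux_quad {n : ℕ} {f : V n → ℝ} (hf : ContDiffAt ℝ 2 f 0)
    (h0 : ∀ j : Fin n, ∀ᶠ s : ℝ in 𝓝 0, f (s • eb j) = 0) (j : Fin n) :
    f =O[𝓝 0] (fun u : V n => ‖u‖ * ‖u - u j • eb j‖) := by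
  have hf1 : ContDiffAt ℝ 1 (fderiv ℝ f) 0 := hf.fderiv_right (by norm_num)
  have hd : ∀ᶠ y in 𝓝 (0 : V n), DifferentiableAt ℝ f y := by
    filter_upwards [(hf.of_le (by norm_num : (1 : WithTop ℕ∞) ≤ 2)).eventually (by simp)] with y hy
    exact hy.differentiableAt (by simp)
  have hz : fderiv ℝ f 0 = 0 := by
    have hk : ∀ k : Fin n, fderiv ℝ f 0 (eb k) = 0 := by
      intro k
      have h1 : HasDerivAt (fun s : ℝ => s • (eb k : V n)) (eb k) 0 := by
        simpa using (hasDerivAt_id (0 : ℝ)).smul_const (eb k : V n)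
      have h2 : HasFDerivAt f (fderiv ℝ f 0) ((0 : ℝ) • (eb k : V n)) := by
        rw [zero_smul]; exact hd.self_of_nhds.hasFDerivAt
      have h3 := h2.comp_hasDerivAt (0 : ℝ) h1
      have h4 : HasDerivAt (f ∘ fun s : ℝ => s • (eb k : V n)) 0 0 :=
        (hasDerivAt_const (0 : ℝ) (0 : ℝ)).congr_of_eventuallyEq (by
          filter_upwards [h0 k] with s hs
          simpa using hs)
      exact h3.unique h4
    ext x
    have hx : x = ∑ k, x k • (eb k : V n) := by
      ext m; simp [eb, Finset.sum_apply, Pi.single_apply]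
    rw [hx, map_sum]
    simp [hk]
  obtain ⟨K, t, ht, hK⟩ := hf1.exists_lipschitzOnWith
  obtain ⟨ε, hε, hball⟩ := Metric.mem_nhds_iff.1 (inter_mem ht hd)
  refine IsBigO.of_bound K ?_
  have hj0 : ∀ᶠ u : V n in 𝓝 0, f (u j • eb j) = 0 := by
    have ht : Tendsto (fun u : V n => u j) (𝓝 0) (𝓝 0) := by
      simpa using (continuous_apply j : Continuous (fun u : V n => u j)).tendsto 0
    exact ht.eventually (h0 j)
  filter_upwards [Metric.ball_mem_nhds 0 hε, hj0] with u hu huj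
  have hsub : Metric.closedBall (0 : V n) ‖u‖ ⊆ Metric.ball 0 ε := by
    apply Metric.closedBall_subset_ball
    simpa using hu
  have h0t : (0 : V n) ∈ t := (hball (Metric.mem_ball_self hε)).1
  have := (convex_closedBall (0 : V n) ‖u‖).norm_image_sub_le_of_norm_fderiv_le (𝕜 := ℝ)
    (f := f) (C := K * ‖u‖) (x := u j • eb j) (y := u)
    (fun y hy => (hball (hsub hy)).2)
    (fun y hy => by
      have h := hK.norm_sub_le (hball (hsub hy)).1 h0t
      rw [hz, sub_zero, sub_zero] at h
      refine h.trans ?_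
      have : ‖y‖ ≤ ‖u‖ := by simpa using hy
      gcongr)
    (by simpa using aux_axis_norm j u) (by simp)
  rw [huj, sub_zero] at this
  simpa [mul_assoc] using this

lemma aux_taylor (a : ℕ) : ∀ ψ : ℝ → ℝ, ContDiffAt ℝ (⊤ : ℕ∞) ψ 0 →
    (∀ k < a, iteratedDeriv k ψ 0 = 0) →
    ψ =O[𝓝 0] (fun s : ℝ => |s| ^ a) := by
  induction a with
  | zero =>
    intro ψ hψ _
    simpa using hψ.continuousAt.tendsto.isBigO_one ℝ
  | succ a ih =>
    intro ψ hψ h0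
    have hd' : ContDiffAt ℝ (⊤ : ℕ∞) (deriv ψ) 0 := by
      have h1 : ContDiffAt ℝ (⊤ : ℕ∞) (fderiv ℝ ψ) 0 := hψ.fderiv_right (by simp)
      have h2 : deriv ψ = fun s => fderiv ℝ ψ s 1 := by ext s; simp
      rw [h2]
      exact h1.clm_apply contDiffAt_const
    have hd : ∀ᶠ y in 𝓝 (0 : ℝ), DifferentiableAt ℝ ψ y := by
      filter_upwards [(hψ.of_le (m := 1) (by simp)).eventually (by simp)] with y hy
      exact hy.differentiableAt (by simp)
    have hO := ih (deriv ψ) hd' (fun k hk => by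
      rw [← iteratedDeriv_succ']; exact h0 (k + 1) (by omega))
    obtain ⟨C, hC0, hC⟩ := hO.exists_nonneg
    obtain ⟨ε, hε, hball⟩ := Metric.mem_nhds_iff.1 (inter_mem hC.bound hd)
    refine IsBigO.of_bound C ?_
    filter_upwards [Metric.ball_mem_nhds 0 hε] with s hs
    have hsub : Metric.closedBall (0 : ℝ) ‖s‖ ⊆ Metric.ball 0 ε := by
      apply Metric.closedBall_subset_ball
      simpa using hs
    have := (convex_closedBall (0 : ℝ) ‖s‖).norm_image_sub_le_of_norm_deriv_le (𝕜 := ℝ)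
      (f := ψ) (C := C * |s| ^ a) (x := 0) (y := s)
      (fun y hy => (hball (hsub hy)).2)
      (fun y hy => by
        have h := (hball (hsub hy)).1
        simp only [mem_ofPred_eq] at h
        refine h.trans ?_
        have : |y| ≤ |s| := by simpa using hy
        rw [norm_pow, Real.norm_eq_abs, abs_abs]
        gcongr)
      (by simp) (by simp)
    have hz := h0 0 (by omega)
    simp only [iteratedDeriv_zero] at hz
    rw [hz] at this
    simpa [pow_succ, mul_assoc] using this

lemma aux_norm_le {n : ℕ} (u : V n) : ‖u‖ ≤ eunorm u := by
  refine (pi_norm_le_iff_of_nonneg (Real.sqrt_nonneg _)).2 fun m => ?_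
  rw [Real.norm_eq_abs]
  apply Real.abs_le_sqrt
  exact Finset.single_le_sum (f := fun i => u i ^ 2) (fun i _ => sq_nonneg _) (Finset.mem_univ m)

namespace HypSys

variable {n : ℕ} (S : HypSys n)

lemma nhd : ∀ᶠ u in 𝓝 (0 : V n), eunorm u < S.δ := by
  have hc : Continuous (eunorm : V n → ℝ) := by unfold eunorm; fun_prop
  have h0 : eunorm (0 : V n) = 0 := by simp [eunorm]
  have := hc.tendsto 0
  rw [h0] at this
  exact this.eventually (gt_mem_nhds S.δ_pos)

lemma nhd' : {u : V n | eunorm u < S.δ} ∈ 𝓝 (0 : V n) := S.nhd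

lemma axis_nhd (P : V n → Prop) (j : Fin n) (h : ∀ᶠ u in 𝓝 (0 : V n), P u) :
    ∀ᶠ s : ℝ in 𝓝 0, P (s • eb j) := by
  have hc : Continuous (fun s : ℝ => s • (eb j : V n)) := by fun_prop
  have := hc.tendsto 0
  rw [zero_smul] at this
  exact this.eventually h

lemma abs_nhd : ∀ᶠ s : ℝ in 𝓝 0, |s| < S.δ := by
  filter_upwards [Metric.ball_mem_nhds (0 : ℝ) S.δ_pos] with s hs
  simpa using hs

lemma cd_lam (i : Fin n) : ContDiffAt ℝ (⊤ : ℕ∞) (S.lam i) 0 := (S.smooth_lam i).contDiffAt S.nhd'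
lemma cd_l (i : Fin n) : ContDiffAt ℝ (⊤ : ℕ∞) (S.l i) 0 := (S.smooth_l i).contDiffAt S.nhd'
lemma cd_r (i : Fin n) : ContDiffAt ℝ (⊤ : ℕ∞) (S.r i) 0 := (S.smooth_r i).contDiffAt S.nhd'
lemma cd_B : ContDiffAt ℝ (⊤ : ℕ∞) S.B 0 := S.smooth_B.contDiffAt S.nhd'

lemma cd_dot {f g : V n → V n} (hf : ContDiffAt ℝ (⊤ : ℕ∞) f 0) (hg : ContDiffAt ℝ (⊤ : ℕ∞) g 0) :
    ContDiffAt ℝ (⊤ : ℕ∞) (fun u => f u ⬝ᵥ g u) 0 := by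
  simp only [dotProduct]
  exact ContDiffAt.sum fun m _ => (contDiffAt_pi.1 hf m).mul (contDiffAt_pi.1 hg m)

lemma cd_b (i : Fin n) : ContDiffAt ℝ (⊤ : ℕ∞) (S.bcoef i) 0 := cd_dot (S.cd_l i) S.cd_B

lemma cd_v (i : Fin n) : ContDiffAt ℝ (⊤ : ℕ∞) (fun u => S.l i u ⬝ᵥ u) 0 :=
  cd_dot (S.cd_l i) contDiffAt_id

lemma cd_dr (j k : Fin n) : ContDiffAt ℝ (⊤ : ℕ∞) (fun u => fderiv ℝ (S.r j) u (S.r k u)) 0 :=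
  ((S.cd_r j).fderiv_right (by simp)).clm_apply (S.cd_r k)

lemma cd_dlam (j k : Fin n) : ContDiffAt ℝ (⊤ : ℕ∞) (fun u => fderiv ℝ (S.lam j) u (S.r k u)) 0 :=
  ((S.cd_lam j).fderiv_right (by simp)).clm_apply (S.cd_r k)

lemma cd_db (i k : Fin n) : ContDiffAt ℝ (⊤ : ℕ∞) (fun u => fderiv ℝ (S.bcoef i) u (S.r k u)) 0 :=
  ((S.cd_b i).fderiv_right (by simp)).clm_apply (S.cd_r k)

lemma cd_nu (i j k : Fin n) : ContDiffAt ℝ (⊤ : ℕ∞) (S.nu i j k) 0 :=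
  (cd_dot (S.cd_l i) (S.cd_dr j k)).neg

lemma cd_sigma (i j k : Fin n) : ContDiffAt ℝ (⊤ : ℕ∞) (S.sigma i j k) 0 :=
  cd_dot (S.cd_l i) ((S.cd_dr k j).sub (S.cd_dr j k))

lemma cd_beta (i j k : Fin n) : ContDiffAt ℝ (⊤ : ℕ∞) (S.beta i j k) 0 :=
  ((S.cd_lam k).sub (S.cd_lam i)).mul (cd_dot (S.cd_l i) (S.cd_dr j k))

lemma cd_ite (i j : Fin n) {f : V n → ℝ} (hf : ContDiffAt ℝ (⊤ : ℕ∞) f 0) :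
    ContDiffAt ℝ (⊤ : ℕ∞) (fun u => if i = j then f u else 0) 0 := by
  split_ifs
  · exact hf
  · exact contDiffAt_const

lemma cd_betaT (i j k : Fin n) : ContDiffAt ℝ (⊤ : ℕ∞) (S.betaT i j k) 0 :=
  (S.cd_beta i j k).add (cd_ite i j (S.cd_dlam i k))

lemma cd_gamma (i j k : Fin n) : ContDiffAt ℝ (⊤ : ℕ∞) (S.gamma i j k) 0 :=
  (((S.cd_lam k).sub (S.cd_lam j)).mul (cd_dot (S.cd_l i) (S.cd_dr j k))).sub
    (cd_ite i j (S.cd_dlam j k))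

lemma cd_gammaT (i j k : Fin n) : ContDiffAt ℝ (⊤ : ℕ∞) (S.gammaT i j k) 0 :=
  (S.cd_gamma i j k).add (contDiffAt_const.mul
    ((cd_ite i j (S.cd_dlam j k)).add (cd_ite i k (S.cd_dlam k j))))

lemma cd_bdd {f : V n → ℝ} (hf : ContDiffAt ℝ (⊤ : ℕ∞) f 0) : f =O[𝓝 0] (fun _ => (1 : ℝ)) :=
  hf.continuousAt.tendsto.isBigO_one ℝ

lemma cd_one {f : V n → ℝ} (hf : ContDiffAt ℝ (⊤ : ℕ∞) f 0) : ContDiffAt ℝ 1 f 0 :=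
  hf.of_le (by simp)

/-- expansion in the basis of right eigenvectors -/
lemma expand {u : V n} (hu : eunorm u < S.δ) (x : V n) :
    x = ∑ k, (S.l k u ⬝ᵥ x) • S.r k u := by
  let L : Matrix (Fin n) (Fin n) ℝ := Matrix.of fun i m => S.l i u m
  let R : Matrix (Fin n) (Fin n) ℝ := Matrix.of fun m j => S.r j u m
  have h : L * R = 1 := by
    ext i j
    rw [Matrix.mul_apply, Matrix.one_apply]
    exact S.norm_lr u hu i j
  have h' : R * L = 1 := mul_eq_one_comm.1 h
  have h2 : R *ᵥ (L *ᵥ x) = x := by rw [Matrix.mulVec_mulVec, h', Matrix.one_mulVec]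
  conv_lhs => rw [← h2]
  ext m
  simp only [Matrix.mulVec, dotProduct, Finset.sum_apply, Pi.smul_apply, smul_eq_mul, L, R,
    Matrix.of_apply]
  exact Finset.sum_congr rfl fun k _ => mul_comm _ _

lemma r_le {u : V n} (hu : eunorm u < S.δ) (k m : Fin n) : |S.r k u m| ≤ 1 := by
  have h := S.norm_rr u hu k
  have h2 := Finset.single_le_sum (f := fun i => S.r k u i * S.r k u i)
    (fun i _ => mul_self_nonneg _) (Finset.mem_univ m)
  rw [dotProduct] at h
  rw [h] at h2
  rw [← sq_le_one_iff_abs_le_one]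
  nlinarith

lemma norm_le_v {u : V n} (hu : eunorm u < S.δ) : ‖u‖ ≤ ∑ k, |S.l k u ⬝ᵥ u| := by
  refine (pi_norm_le_iff_of_nonneg (Finset.sum_nonneg fun _ _ => abs_nonneg _)).2 fun m => ?_
  conv_lhs => rw [S.expand hu u]
  rw [Finset.sum_apply]
  refine (norm_sum_le _ _).trans (Finset.sum_le_sum fun k _ => ?_)
  simp only [Pi.smul_apply, smul_eq_mul, norm_mul, Real.norm_eq_abs]
  exact mul_le_of_le_one_right (abs_nonneg _) (S.r_le hu k m)

lemma dist_axis (hNorm : S.Normalized) (j : Fin n) :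
    ∀ᶠ u in 𝓝 (0 : V n), ‖u - u j • eb j‖ ≤
      2 * ∑ k, if k = j then 0 else |S.l k u ⬝ᵥ u| := by
  have hO : ∀ m : Fin n, ∃ C, 0 ≤ C ∧ ∀ᶠ u in 𝓝 (0 : V n), m ≠ j →
      |S.r j u m| ≤ C * ‖u - u j • eb j‖ := by
    intro m
    by_cases hm : m = j
    · exact ⟨0, le_rfl, by simp [hm]⟩
    have h := aux_lip_zero (g := fun u => S.r j u m)
      ((contDiffAt_pi.1 (S.cd_r j) m).of_le (by simp)) j (by
        filter_upwards [S.abs_nhd] with s hs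
        rw [hNorm j s hs]; simp [eb, hm])
    obtain ⟨C, hC0, hC⟩ := h.exists_nonneg
    exact ⟨C, hC0, hC.bound.mono fun u hu _ => hu⟩
  choose C hC0 hC using hO
  have hv : Tendsto (fun u => |S.l j u ⬝ᵥ u| * ∑ m, C m) (𝓝 0) (𝓝 0) := by
    have := ((S.cd_v j).continuousAt.tendsto.abs).mul_const (∑ m, C m)
    simpa using this
  filter_upwards [S.nhd, eventually_all.2 hC, hv.eventually (gt_mem_nhds (by norm_num : (0 : ℝ) < 1 / 2))]
    with u hu hCu hvu
  set d := ‖u - u j • eb j‖ with hd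
  have hd0 : 0 ≤ d := norm_nonneg _
  have key : d ≤ 1 / 2 * d + ∑ k, if k = j then 0 else |S.l k u ⬝ᵥ u| := by
    have hnn : 0 ≤ ∑ k, if k = j then 0 else |S.l k u ⬝ᵥ u| :=
      Finset.sum_nonneg fun k _ => by split_ifs <;> positivity
    refine (pi_norm_le_iff_of_nonneg (by positivity)).2 fun m => ?_
    by_cases hm : m = j
    · subst hm
      simp only [Pi.sub_apply, Pi.smul_apply, eb, Pi.single_eq_same, smul_eq_mul, mul_one, sub_self,
        norm_zero]
      positivity
    have e1 : (u - u j • (eb j : V n)) m = u m := by simp [eb, hm]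
    rw [e1]
    conv_lhs => rw [S.expand hu u]
    rw [Finset.sum_apply]
    refine (norm_sum_le _ _).trans ?_
    rw [← Finset.add_sum_erase _ _ (Finset.mem_univ j)]
    have e2 : (∑ k, if k = j then 0 else |S.l k u ⬝ᵥ u|) =
        ∑ k ∈ Finset.univ.erase j, |S.l k u ⬝ᵥ u| := by
      rw [← Finset.add_sum_erase _ _ (Finset.mem_univ j)]
      simp only [if_true, zero_add]
      exact Finset.sum_congr rfl fun k hk => if_neg (Finset.ne_of_mem_erase hk)
    rw [e2]
    refine add_le_add ?_ (Finset.sum_le_sum fun k _ => ?_)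
    · simp only [Pi.smul_apply, smul_eq_mul, norm_mul, Real.norm_eq_abs]
      have h1 := hCu m hm
      have h2 : C m ≤ ∑ m, C m := Finset.single_le_sum (fun i _ => hC0 i) (Finset.mem_univ m)
      calc |S.l j u ⬝ᵥ u| * |S.r j u m| ≤ |S.l j u ⬝ᵥ u| * ((∑ m, C m) * d) := by
            gcongr; exact h1.trans (by gcongr)
        _ = (|S.l j u ⬝ᵥ u| * ∑ m, C m) * d := by ring
        _ ≤ 1 / 2 * d := by gcongr
    · simp only [Pi.smul_apply, smul_eq_mul, norm_mul, Real.norm_eq_abs]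
      exact mul_le_of_le_one_right (abs_nonneg _) (S.r_le hu k m)
  linarith

lemma b_axis (hMatch : S.Matching) (i j : Fin n) : ∀ᶠ s : ℝ in 𝓝 0, S.bcoef i (s • eb j) = 0 := by
  filter_upwards [S.abs_nhd] with s hs
  simp [bcoef, hMatch j s hs]

/-- derivative along the axis -/
lemma axis_deriv {E : Type*} [NormedAddCommGroup E] [NormedSpace ℝ E] {f : V n → E}
    (hf : ContDiffAt ℝ (⊤ : ℕ∞) f 0) (hNorm : S.Normalized) (j : Fin n) :
    ∀ᶠ s : ℝ in 𝓝 0, fderiv ℝ f (s • eb j) (S.r j (s • eb j)) =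
      deriv (fun s : ℝ => f (s • eb j)) s := by
  have hd : ∀ᶠ y in 𝓝 (0 : V n), DifferentiableAt ℝ f y := by
    filter_upwards [(hf.of_le (m := 1) (by simp)).eventually (by simp)] with y hy
    exact hy.differentiableAt (by simp)
  filter_upwards [axis_nhd _ j hd, S.abs_nhd] with s hs hs'
  rw [hNorm j s hs']
  have h1 : HasDerivAt (fun s : ℝ => s • (eb j : V n)) (eb j) s := by
    simpa using (hasDerivAt_id s).smul_const (eb j : V n)
  exact (hs.hasFDerivAt.comp_hasDerivAt s h1).deriv.symm

lemma axis_deriv_zero {E : Type*} [NormedAddCommGroup E] [NormedSpace ℝ E] {f : V n → E} {c : E}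
    (hf : ContDiffAt ℝ (⊤ : ℕ∞) f 0) (hNorm : S.Normalized) (j : Fin n)
    (h0 : ∀ᶠ s : ℝ in 𝓝 0, f (s • eb j) = c) :
    ∀ᶠ s : ℝ in 𝓝 0, fderiv ℝ f (s • eb j) (S.r j (s • eb j)) = 0 := by
  filter_upwards [S.axis_deriv hf hNorm j, h0.eventually_nhds] with s hs h
  rw [hs]
  have : (fun s : ℝ => f (s • eb j)) =ᶠ[𝓝 s] fun _ => c := h
  rw [this.deriv_eq]; simp

lemma beta_O (hNorm : S.Normalized) (i j : Fin n) :
    S.beta i j j =O[𝓝 0] (fun u : V n => ‖u - u j • eb j‖) := by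
  refine IsBigO.norm_right (aux_lip_zero (cd_one (S.cd_beta i j j)) j ?_)
  filter_upwards [S.axis_deriv_zero (S.cd_r j) hNorm j (c := eb j) (by
    filter_upwards [S.abs_nhd] with s hs using hNorm j s hs)] with s hs
  simp [beta, hs]

lemma dlam_O (hNorm : S.Normalized) (a : ℕ) (hMin : S.IsMinAlpha a) (i : Fin n) :
    (fun u : V n => fderiv ℝ (S.lam i) u (S.r i u)) =O[𝓝 0]
      (fun u : V n => ‖u - u i • eb i‖ + |u i| ^ a) := by
  set φ : ℝ → ℝ := fun s => S.lam i (s • eb i) with hφ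
  have hφc : ContDiffAt ℝ (⊤ : ℕ∞) φ 0 := by
    have h1 : ContDiffAt ℝ (⊤ : ℕ∞) (fun s : ℝ => s • (eb i : V n)) 0 :=
      contDiffAt_id.smul contDiffAt_const
    refine ContDiffAt.comp (g := S.lam i) (0 : ℝ) ?_ h1
    rw [zero_smul]; exact S.cd_lam i
  have hder : ∀ k, 1 ≤ k → k ≤ a → S.axisDeriv i k = 0 := by
    by_cases hW : S.WLD i
    · intro k hk _
      have : φ =ᶠ[𝓝 0] fun _ => S.lam i 0 := by
        filter_upwards [S.abs_nhd] with s hs using hW s hs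
      have h2 := this.iteratedDeriv_eq k
      rw [axisDeriv, h2, iteratedDeriv_const]
      simp; omega
    · intro k
      induction k using Nat.strong_induction_on with
      | _ k ih =>
        intro hk hka
        by_contra hne
        have := hMin.2 i hW (k - 1) ⟨fun m hm hmk => ih m (by omega) hm (by omega), by
          rwa [Nat.sub_add_cancel hk]⟩
        omega
  have hψ : (deriv φ) =O[𝓝 0] (fun s : ℝ => |s| ^ a) := by
    refine aux_taylor a _ ?_ fun k hk => ?_
    · have h1 : ContDiffAt ℝ (⊤ : ℕ∞) (fderiv ℝ φ) 0 := hφc.fderiv_right (by simp)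
      have h2 : deriv φ = fun s => fderiv ℝ φ s 1 := by ext s; simp
      rw [h2]
      exact h1.clm_apply contDiffAt_const
    · rw [← iteratedDeriv_succ']
      exact hder (k + 1) (by omega) (by omega)
  have ht : Tendsto (fun u : V n => u i) (𝓝 0) (𝓝 0) := by
    simpa using (continuous_apply i : Continuous (fun u : V n => u i)).tendsto 0
  have h1 := (aux_lip (cd_one (S.cd_dlam i i)) i).norm_right
  have h2 : (fun u : V n => fderiv ℝ (S.lam i) (u i • eb i) (S.r i (u i • eb i))) =O[𝓝 0]
      (fun u : V n => |u i| ^ a) := by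
    refine (hψ.comp_tendsto ht).congr' ?_ (EventuallyEq.refl _ _)
    filter_upwards [ht.eventually (S.axis_deriv (S.cd_lam i) hNorm i)] with u hu
    exact hu.symm
  have h3 : (fun u : V n => ‖u - u i • eb i‖) =O[𝓝 0]
      (fun u : V n => ‖u - u i • eb i‖ + |u i| ^ a) := isBigO_of_le _ fun u => by
    rw [Real.norm_of_nonneg (by positivity), Real.norm_of_nonneg (by positivity)]
    linarith [pow_nonneg (abs_nonneg (u i)) a]
  have h4 : (fun u : V n => |u i| ^ a) =O[𝓝 0]
      (fun u : V n => ‖u - u i • eb i‖ + |u i| ^ a) := isBigO_of_le _ fun u => by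
    rw [Real.norm_of_nonneg (by positivity), Real.norm_of_nonneg (by positivity)]
    linarith [norm_nonneg (u - u i • eb i)]
  exact ((h1.trans h3).add (h2.trans h4)).congr_left fun u => by ring

lemma h_O (hNorm : S.Normalized) (hMatch : S.Matching) (i j : Fin n) :
    (fun u : V n => (∑ k, S.sigma i j k u * S.bcoef k u) + fderiv ℝ (S.bcoef i) u (S.r j u))
      =O[𝓝 0] (fun u : V n => ‖u - u j • eb j‖) := by
  refine IsBigO.norm_right (aux_lip_zero (cd_one (ContDiffAt.add (ContDiffAt.sum fun k _ =>
    (S.cd_sigma i j k).mul (S.cd_b k)) (S.cd_db i j))) j ?_)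
  filter_upwards [S.axis_deriv_zero (S.cd_b i) hNorm j (S.b_axis hMatch i j),
    eventually_all.2 fun k => S.b_axis hMatch k j] with s hs h
  simp [hs, h]

lemma b_O (hNorm : S.Normalized) (hMatch : S.Matching) (i : Fin n) :
    S.bcoef i =O[𝓝 0] (fun u : V n => ∑ j : Fin n, ∑ k : Fin n, if j = k then 0 else
      |(S.l j u ⬝ᵥ u) * (S.l k u ⬝ᵥ u)|) := by
  have hO : ∀ j : Fin n, ∃ C, 0 ≤ C ∧ ∀ᶠ u in 𝓝 (0 : V n),
      |S.bcoef i u| ≤ C * (‖u‖ * ‖u - u j • eb j‖) := by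
    intro j
    obtain ⟨C, hC0, hC⟩ := (aux_quad ((S.cd_b i).of_le (WithTop.coe_le_coe.2 (le_top : (2 : ℕ∞) ≤ ⊤)))
      (fun j => S.b_axis hMatch i j) j).exists_nonneg
    refine ⟨C, hC0, hC.bound.mono fun u hu => ?_⟩
    rwa [Real.norm_eq_abs, Real.norm_of_nonneg (by positivity)] at hu
  choose C hC0 hC using hO
  refine IsBigO.of_bound ((∑ j, C j) * n * 2) ?_
  filter_upwards [S.nhd, eventually_all.2 hC, eventually_all.2 (S.dist_axis hNorm)] with u hu hCu hd
  have : Nonempty (Fin n) := ⟨i⟩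
  obtain ⟨J, hJ⟩ := Finite.exists_max (fun j => |S.l j u ⬝ᵥ u|)
  have h1 : ‖u‖ ≤ n * |S.l J u ⬝ᵥ u| := by
    refine (S.norm_le_v hu).trans ?_
    refine (Finset.sum_le_sum fun k _ => hJ k).trans ?_
    simp
  have hT : 0 ≤ ∑ j, C j := Finset.sum_nonneg fun j _ => hC0 j
  have hCJ : C J ≤ ∑ j, C j := Finset.single_le_sum (fun j _ => hC0 j) (Finset.mem_univ J)
  have hQ : |S.l J u ⬝ᵥ u| * (∑ k, if k = J then 0 else |S.l k u ⬝ᵥ u|) ≤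
      ∑ j : Fin n, ∑ k : Fin n, if j = k then 0 else |(S.l j u ⬝ᵥ u) * (S.l k u ⬝ᵥ u)| := by
    have hs := Finset.single_le_sum (f := fun j => ∑ k : Fin n, if j = k then 0 else
      |(S.l j u ⬝ᵥ u) * (S.l k u ⬝ᵥ u)|) (fun j _ => Finset.sum_nonneg fun k _ => by
        split_ifs <;> positivity) (Finset.mem_univ J)
    refine le_trans (le_of_eq ?_) hs
    rw [Finset.mul_sum]
    refine Finset.sum_congr rfl fun k _ => ?_
    by_cases hk : k = J
    · simp [hk]
    · simp [hk, Ne.symm hk, abs_mul]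
  rw [Real.norm_eq_abs]
  refine le_trans ?_ (mul_le_mul_of_nonneg_left (Real.le_norm_self _) (by positivity))
  refine le_trans ?_ (mul_le_mul_of_nonneg_left hQ (by positivity))
  calc |S.bcoef i u| ≤ C J * (‖u‖ * ‖u - u J • eb J‖) := hCu J
    _ ≤ (∑ j, C j) * ((n * |S.l J u ⬝ᵥ u|) * (2 * ∑ k, if k = J then 0 else |S.l k u ⬝ᵥ u|)) := by
        gcongr
        exact hd J
    _ = _ := by ring

end HypSys

namespace HypSys

variable {n : ℕ} (S : HypSys n)

/-- the filter of pairs `(u, u_x)` with `u` small and `u_x` arbitrary -/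
def LF (n : ℕ) : Filter (V n × V n) := comap Prod.fst (𝓝 0)

def vv (k : Fin n) (p : V n × V n) : ℝ := S.l k p.1 ⬝ᵥ p.1
def ww (k : Fin n) (p : V n × V n) : ℝ := S.l k p.1 ⬝ᵥ p.2

def qvw (p : V n × V n) : ℝ :=
  ∑ j : Fin n, ∑ k : Fin n, if j = k then 0 else |S.vv j p * S.ww k p|
def qvv (p : V n × V n) : ℝ :=
  ∑ j : Fin n, ∑ k : Fin n, if j = k then 0 else |S.vv j p * S.vv k p|
def qww (p : V n × V n) : ℝ :=
  ∑ j : Fin n, ∑ k : Fin n, if j = k then 0 else |S.ww j p * S.ww k p|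

lemma lift_O {f g : V n → ℝ} (h : f =O[𝓝 0] g) :
    (fun p : V n × V n => f p.1) =O[LF n] (fun p => g p.1) :=
  h.comp_tendsto tendsto_comap

lemma q_nonneg (F : Fin n → Fin n → ℝ) :
    0 ≤ ∑ j : Fin n, ∑ k : Fin n, if j = k then 0 else |F j k| :=
  Finset.sum_nonneg fun j _ => Finset.sum_nonneg fun k _ => by split_ifs <;> positivity

lemma q_single (F : Fin n → Fin n → ℝ) {j k : Fin n} (h : j ≠ k) :
    |F j k| ≤ ∑ j : Fin n, ∑ k : Fin n, if j = k then 0 else |F j k| := by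
  have h1 := Finset.single_le_sum (f := fun j => ∑ k : Fin n, if j = k then 0 else |F j k|)
    (fun j _ => Finset.sum_nonneg fun k _ => by split_ifs <;> positivity) (Finset.mem_univ j)
  have h2 := Finset.single_le_sum (f := fun k => if j = k then 0 else |F j k|)
    (fun k _ => by split_ifs <;> positivity) (Finset.mem_univ k)
  simp only [if_neg h] at h2
  exact h2.trans h1

lemma vw_O {j k : Fin n} (h : j ≠ k) :
    (fun p => S.vv j p * S.ww k p) =O[LF n] S.qvw :=
  isBigO_of_le _ fun p => by
    refine le_trans ?_ (Real.le_norm_self _)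
    exact q_single (fun j k => S.vv j p * S.ww k p) h

lemma ww_O {j k : Fin n} (h : j ≠ k) :
    (fun p => S.ww j p * S.ww k p) =O[LF n] S.qww :=
  isBigO_of_le _ fun p => by
    refine le_trans ?_ (Real.le_norm_self _)
    exact q_single (fun j k => S.ww j p * S.ww k p) h

lemma dw_O (hNorm : S.Normalized) (j : Fin n) :
    (fun p : V n × V n => ‖p.1 - p.1 j • eb j‖ * S.ww j p) =O[LF n] S.qvw := by
  have h1 : (fun p : V n × V n => ‖p.1 - p.1 j • eb j‖ * S.ww j p) =O[LF n]
      (fun p => (∑ k, if k = j then 0 else |S.vv k p|) * S.ww j p) := by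
    refine IsBigO.mul ?_ (isBigO_refl _ _)
    refine lift_O (f := fun u => ‖u - u j • eb j‖)
      (g := fun u => ∑ k, if k = j then 0 else |S.l k u ⬝ᵥ u|) (IsBigO.of_bound 2 ?_)
    filter_upwards [S.dist_axis hNorm j] with u hu
    rw [norm_norm]
    exact hu.trans (mul_le_mul_of_nonneg_left (Real.le_norm_self _) (by norm_num))
  refine h1.trans ?_
  simp only [Finset.sum_mul]
  refine IsBigO.fun_sum fun k _ => ?_
  by_cases hk : k = j
  · simp only [hk, if_true, zero_mul]; exact isBigO_zero _ _
  · simp only [hk, if_false]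
    refine IsBigO.trans (isBigO_of_le _ fun p => ?_) (S.vw_O hk)
    simp

lemma bq_O (hNorm : S.Normalized) (hMatch : S.Matching) (i : Fin n) :
    (fun p : V n × V n => S.bcoef i p.1) =O[LF n] S.qvv :=
  lift_O (S.b_O hNorm hMatch i)

lemma v_bdd (k : Fin n) : S.vv k =O[LF n] (fun _ => (1 : ℝ)) :=
  lift_O (g := fun _ => 1) (cd_bdd (S.cd_v k))

lemma F_O (hNorm : S.Normalized) (hMatch : S.Matching) (a : ℕ) (hMin : S.IsMinAlpha a)
    (i : Fin n) :
    (fun p : V n × V n => (∑ j : Fin n, ∑ k : Fin n, S.betaT i j k p.1 * S.vv j p * S.ww k p) +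
      (∑ j : Fin n, ∑ k : Fin n, S.nu i j k p.1 * S.vv j p * S.bcoef k p.1) + S.bcoef i p.1)
    =O[LF n] (fun p => S.qvw p + S.qvv p + |p.1 i| ^ a * |S.vv i p * S.ww i p|) := by
  have n1 : ∀ p, 0 ≤ S.qvw p := fun p => q_nonneg fun j k => S.vv j p * S.ww k p
  have n2 : ∀ p, 0 ≤ S.qvv p := fun p => q_nonneg fun j k => S.vv j p * S.vv k p
  have n3 : ∀ p : V n × V n, 0 ≤ |p.1 i| ^ a * |S.vv i p * S.ww i p| := fun p => by positivity
  have o1 : S.qvw =O[LF n] (fun p => S.qvw p + S.qvv p + |p.1 i| ^ a * |S.vv i p * S.ww i p|) :=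
    isBigO_of_le _ fun p => by
      rw [Real.norm_of_nonneg (n1 p), Real.norm_of_nonneg] <;> linarith [n1 p, n2 p, n3 p]
  have o2 : S.qvv =O[LF n] (fun p => S.qvw p + S.qvv p + |p.1 i| ^ a * |S.vv i p * S.ww i p|) :=
    isBigO_of_le _ fun p => by
      rw [Real.norm_of_nonneg (n2 p), Real.norm_of_nonneg] <;> linarith [n1 p, n2 p, n3 p]
  have o3 : (fun p : V n × V n => |p.1 i| ^ a * |S.vv i p * S.ww i p|) =O[LF n]
      (fun p => S.qvw p + S.qvv p + |p.1 i| ^ a * |S.vv i p * S.ww i p|) :=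
    isBigO_of_le _ fun p => by
      rw [Real.norm_of_nonneg (n3 p), Real.norm_of_nonneg] <;> linarith [n1 p, n2 p, n3 p]
  have dvw : ∀ j, (fun p : V n × V n => ‖p.1 - p.1 j • eb j‖ * S.vv j p * S.ww j p) =O[LF n]
      S.qvw := fun j => by
    have := (S.v_bdd j).mul (S.dw_O hNorm j)
    refine (this.congr_left fun p => ?_).congr_right fun p => ?_
    · ring
    · ring
  refine IsBigO.add (IsBigO.add ?_ ?_) ?_
  · refine IsBigO.fun_sum fun j _ => IsBigO.fun_sum fun k _ => ?_
    by_cases hjk : j = k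
    · subst hjk
      by_cases hij : i = j
      · subst hij
        have e : ∀ u, S.betaT i i i u = fderiv ℝ (S.lam i) u (S.r i u) := fun u => by
          simp [betaT, beta]
        simp only [e]
        have h := ((lift_O (S.dlam_O hNorm a hMin i)).mul (isBigO_refl (S.vv i) _)).mul
          (isBigO_refl (S.ww i) _)
        refine h.trans ?_
        have h2 := ((dvw i).trans o1).add ((IsBigO.of_bound' (f := fun p : V n × V n =>
          |p.1 i| ^ a * S.vv i p * S.ww i p) (Eventually.of_forall fun p => by
            simp [abs_mul, mul_assoc])).trans o3)
        exact h2.congr_left fun p => by ring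
      · have e : ∀ u, S.betaT i j j u = S.beta i j j u := fun u => by simp [betaT, hij]
        simp only [e]
        exact ((((lift_O (S.beta_O hNorm i j)).mul (isBigO_refl (S.vv j) _)).mul
          (isBigO_refl (S.ww j) _)).trans (dvw j)).trans o1
    · have h := (lift_O (cd_bdd (S.cd_betaT i j k))).mul (S.vw_O hjk)
      exact ((h.congr_left fun p => by ring).congr_right fun p => by ring).trans o1
  · refine IsBigO.fun_sum fun j _ => IsBigO.fun_sum fun k _ => ?_
    have h := ((lift_O (cd_bdd (S.cd_nu i j k))).mul (S.v_bdd j)).mul (S.bq_O hNorm hMatch k)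
    exact (h.congr_right fun p => by ring).trans o2
  · exact (S.bq_O hNorm hMatch i).trans o2

lemma G_O (hNorm : S.Normalized) (hMatch : S.Matching) (i : Fin n) :
    (fun p : V n × V n => (∑ j : Fin n, ∑ k : Fin n, S.gammaT i j k p.1 * S.ww j p * S.ww k p) +
      (∑ j : Fin n, ∑ k : Fin n, S.sigma i j k p.1 * S.ww j p * S.bcoef k p.1) +
      fderiv ℝ (S.bcoef i) p.1 p.2)
    =O[LF n] (fun p => S.qvw p + S.qww p) := by
  have n1 : ∀ p, 0 ≤ S.qvw p := fun p => q_nonneg fun j k => S.vv j p * S.ww k p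
  have n2 : ∀ p, 0 ≤ S.qww p := fun p => q_nonneg fun j k => S.ww j p * S.ww k p
  have o1 : S.qvw =O[LF n] (fun p => S.qvw p + S.qww p) :=
    isBigO_of_le _ fun p => by
      rw [Real.norm_of_nonneg (n1 p), Real.norm_of_nonneg] <;> linarith [n1 p, n2 p]
  have o2 : S.qww =O[LF n] (fun p => S.qvw p + S.qww p) :=
    isBigO_of_le _ fun p => by
      rw [Real.norm_of_nonneg (n2 p), Real.norm_of_nonneg] <;> linarith [n1 p, n2 p]
  have hA : (fun p : V n × V n => ∑ j : Fin n, ∑ k : Fin n,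
      S.gammaT i j k p.1 * S.ww j p * S.ww k p) =O[LF n] (fun p => S.qvw p + S.qww p) := by
    refine IsBigO.fun_sum fun j _ => IsBigO.fun_sum fun k _ => ?_
    by_cases hjk : j = k
    · subst hjk
      have e : ∀ u, S.gammaT i j j u = 0 := fun u => by
        simp only [gammaT, gamma]
        split_ifs <;> ring
      simp only [e, zero_mul]
      exact isBigO_zero _ _
    · have h := (lift_O (cd_bdd (S.cd_gammaT i j k))).mul (S.ww_O hjk)
      exact ((h.congr_left fun p => by ring).congr_right fun p => by ring).trans o2
  have hB : (fun p : V n × V n => ∑ j : Fin n, ((∑ k, S.sigma i j k p.1 * S.bcoef k p.1) +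
      fderiv ℝ (S.bcoef i) p.1 (S.r j p.1)) * S.ww j p) =O[LF n] (fun p => S.qvw p + S.qww p) := by
    refine IsBigO.fun_sum fun j _ => ?_
    exact (((lift_O (S.h_O hNorm hMatch i j)).mul (isBigO_refl (S.ww j) _)).trans
      (S.dw_O hNorm j)).trans o1
  refine (hA.add hB).congr' ?_ (EventuallyEq.refl _ _)
  have hn : ∀ᶠ p in LF n, eunorm p.1 < S.δ := tendsto_comap.eventually S.nhd
  filter_upwards [hn] with p hp
  have e : fderiv ℝ (S.bcoef i) p.1 p.2 =
      ∑ j, fderiv ℝ (S.bcoef i) p.1 (S.r j p.1) * S.ww j p := by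
    conv_lhs => rw [S.expand hp p.2]
    rw [map_sum]
    refine Finset.sum_congr rfl fun j _ => ?_
    rw [map_smul, smul_eq_mul, mul_comm, ww]
  have e2 : (∑ j : Fin n, ((∑ k, S.sigma i j k p.1 * S.bcoef k p.1) +
      fderiv ℝ (S.bcoef i) p.1 (S.r j p.1)) * S.ww j p) =
      (∑ j : Fin n, ∑ k : Fin n, S.sigma i j k p.1 * S.ww j p * S.bcoef k p.1) +
      ∑ j, fderiv ℝ (S.bcoef i) p.1 (S.r j p.1) * S.ww j p := by
    rw [← Finset.sum_add_distrib]
    refine Finset.sum_congr rfl fun j _ => ?_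
    rw [add_mul, Finset.sum_mul]
    congr 1
    exact Finset.sum_congr rfl fun k _ => by ring
  beta_reduce
  rw [e2, e, add_assoc]

end HypSys


/-- **The pointwise bounds (3.3)–(3.4)** on the source terms `F̃_i`, `G̃_i` of
the divergence-form decomposition.  In normalized coordinates with the
matching condition and `α = min{α_i : i ∈ J} < ∞`, there is a constant
`C > 0` depending only on the system such that for any `C¹` solution `u` with
`|u|` small:
`|F̃_i| ≤ C [Σ_{j≠k}|v_j w_k| + Σ_{j≠k}|v_j v_k| + |u_i|^α |v_i w_i|]` and
`|G̃_i| ≤ C [Σ_{j≠k}|v_j w_k| + Σ_{j≠k}|w_j w_k|]`. -/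
theorem stmt17 {n : ℕ} (S : HypSys n) (hNorm : S.Normalized) (hMatch : S.Matching)
    (a : ℕ) (hMin : S.IsMinAlpha a) :
    ∃ δ' : ℝ, 0 < δ' ∧ δ' ≤ S.δ ∧ ∃ C > (0 : ℝ),
    ∀ u : ℝ → ℝ → V n, ∀ Ω : Set (ℝ × ℝ), S.IsSol1On u Ω →
    (∀ p ∈ Ω, eunorm (u p.1 p.2) < δ') →
    ∀ i : Fin n, ∀ p ∈ Ω,
      |(∑ j : Fin n, ∑ k : Fin n,
            S.betaT i j k (u p.1 p.2) * S.vC u j p.1 p.2 * S.wC u k p.1 p.2) +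
          (∑ j : Fin n, ∑ k : Fin n,
            S.nu i j k (u p.1 p.2) * S.vC u j p.1 p.2 * S.bcoef k (u p.1 p.2)) +
          S.bcoef i (u p.1 p.2)| ≤
        C * ((∑ j : Fin n, ∑ k : Fin n, if j = k then 0 else
                |S.vC u j p.1 p.2 * S.wC u k p.1 p.2|) +
             (∑ j : Fin n, ∑ k : Fin n, if j = k then 0 else
                |S.vC u j p.1 p.2 * S.vC u k p.1 p.2|) +
             |u p.1 p.2 i| ^ a * |S.vC u i p.1 p.2 * S.wC u i p.1 p.2|) ∧
      |(∑ j : Fin n, ∑ k : Fin n,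
            S.gammaT i j k (u p.1 p.2) * S.wC u j p.1 p.2 * S.wC u k p.1 p.2) +
          (∑ j : Fin n, ∑ k : Fin n,
            S.sigma i j k (u p.1 p.2) * S.wC u j p.1 p.2 * S.bcoef k (u p.1 p.2)) +
          deriv (fun y => S.bcoef i (u p.1 y)) p.2| ≤
        C * ((∑ j : Fin n, ∑ k : Fin n, if j = k then 0 else
                |S.vC u j p.1 p.2 * S.wC u k p.1 p.2|) +
             (∑ j : Fin n, ∑ k : Fin n, if j = k then 0 else
                |S.wC u j p.1 p.2 * S.wC u k p.1 p.2|)) := by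
  classical
  have hF := fun i : Fin n => (S.F_O hNorm hMatch a hMin i).exists_pos
  have hG := fun i : Fin n => (S.G_O hNorm hMatch i).exists_pos
  choose CF hCF hF using hF
  choose CG hCG hG using hG
  have hd : ∀ i : Fin n, ∀ᶠ y in 𝓝 (0 : V n), DifferentiableAt ℝ (S.bcoef i) y := by
    intro i
    filter_upwards [((S.cd_b i).of_le (m := 1) (by simp)).eventually (by simp)] with y hy
    exact hy.differentiableAt (by simp)
  have hev := eventually_all.2 fun i : Fin n =>
    ((hF i).bound.and (hG i).bound).and (tendsto_comap.eventually (hd i))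
  obtain ⟨t, ht, hsub⟩ := mem_comap.1 hev
  obtain ⟨ε, hε, hball⟩ := Metric.mem_nhds_iff.1 ht
  refine ⟨min ε S.δ, lt_min hε S.δ_pos, min_le_right _ _,
    (∑ i, CF i) + (∑ i, CG i) + 1, ?_, ?_⟩
  · have h1 : 0 ≤ ∑ i, CF i := Finset.sum_nonneg fun i _ => (hCF i).le
    have h2 : 0 ≤ ∑ i, CG i := Finset.sum_nonneg fun i _ => (hCG i).le
    linarith
  intro u Ω hsol hsmall i p hp
  have h1 : 0 ≤ ∑ i, CF i := Finset.sum_nonneg fun i _ => (hCF i).le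
  have h2 : 0 ≤ ∑ i, CG i := Finset.sum_nonneg fun i _ => (hCG i).le
  have h3 : CF i ≤ ∑ i, CF i := Finset.single_le_sum (fun i _ => (hCF i).le) (Finset.mem_univ i)
  have h4 : CG i ≤ ∑ i, CG i := Finset.single_le_sum (fun i _ => (hCG i).le) (Finset.mem_univ i)
  have hmem : u p.1 p.2 ∈ t := hball (by
    rw [mem_ball_zero_iff]
    exact (aux_norm_le _).trans_lt ((hsmall p hp).trans_le (min_le_left _ _)))
  have hP := hsub (show ((u p.1 p.2, deriv (fun y => u p.1 y) p.2) : V n × V n) ∈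
    Prod.fst ⁻¹' t from hmem) i
  obtain ⟨⟨hPF, hPG⟩, hPd⟩ := hP
  have hderiv : deriv (fun y => S.bcoef i (u p.1 y)) p.2 =
      fderiv ℝ (S.bcoef i) (u p.1 p.2) (deriv (fun y => u p.1 y) p.2) := by
    have hu : DifferentiableAt ℝ (fun q : ℝ × ℝ => u q.1 q.2) p :=
      (hsol.smooth.contDiffAt (hsol.isOpen.mem_nhds hp)).differentiableAt (by simp)
    have hu2 : DifferentiableAt ℝ (fun y => u p.1 y) p.2 := by
      have hy : DifferentiableAt ℝ (fun y : ℝ => (p.1, y)) p.2 := by fun_prop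
      exact DifferentiableAt.comp (g := fun q : ℝ × ℝ => u q.1 q.2) p.2 hu hy
    exact (hPd.hasFDerivAt.comp_hasDerivAt p.2 hu2.hasDerivAt).deriv
  rw [hderiv]
  refine ⟨hPF.trans ?_, hPG.trans ?_⟩
  · rw [Real.norm_of_nonneg]
    · refine mul_le_mul_of_nonneg_right (by linarith) ?_
      exact add_nonneg (add_nonneg (HypSys.q_nonneg fun j k => S.vC u j p.1 p.2 * S.wC u k p.1 p.2)
        (HypSys.q_nonneg fun j k => S.vC u j p.1 p.2 * S.vC u k p.1 p.2)) (by positivity)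
    · exact add_nonneg (add_nonneg (HypSys.q_nonneg fun j k => S.vC u j p.1 p.2 * S.wC u k p.1 p.2)
        (HypSys.q_nonneg fun j k => S.vC u j p.1 p.2 * S.vC u k p.1 p.2)) (by positivity)
  · rw [Real.norm_of_nonneg]
    · refine mul_le_mul_of_nonneg_right (by linarith) ?_
      exact add_nonneg (HypSys.q_nonneg fun j k => S.vC u j p.1 p.2 * S.wC u k p.1 p.2)
        (HypSys.q_nonneg fun j k => S.wC u j p.1 p.2 * S.wC u k p.1 p.2)
    · exact add_nonneg (HypSys.q_nonneg fun j k => S.vC u j p.1 p.2 * S.wC u k p.1 p.2)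
        (HypSys.q_nonneg fun j k => S.wC u j p.1 p.2 * S.wC u k p.1 p.2)
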